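/- arXiv:0803.3469 — 2 statements merged into one kernel-verified Lean document; each statement's English description precedes it below -/
import Mathlib

section
/- For all nonnegative integers n, m, i with i ≤ n+m, the counting function satisfies N(n,m;i) · Π_{j=0}^{n+m−i−1} (2^{n+m−i} − 2^j) = Π_{j=0}^{n+m−i−1} (2^n − 2^j)(2^m − 2^j) (empty products being 1, so N(n,m;n+m) = 1), and N(n,m;i) = 0 whenever i > n+m. In particular N(n,m;i) = 0 whenever n > i or m > i and i < n+m, since one of the factors on the right then vanishes. -/
open scoped BigOperators

abbrev ThetaChar (g : ℕ) := (Fin g → ZMod 2) × (Fin g → ZMod 2)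

/-- Theta constant with characteristic `v = [ε; δ]`. -/
noncomputable def theta {g : ℕ} (v : ThetaChar g) (τ : Matrix (Fin g) (Fin g) ℂ) : ℂ :=
  ∑' n : Fin g → ℤ,
    Complex.exp ((Real.pi : ℂ) * Complex.I *
      ((∑ i, ∑ j, ((n i : ℂ) + ((v.1 i).val : ℂ) / 2) * τ i j *
          ((n j : ℂ) + ((v.1 j).val : ℂ) / 2)) +
        ∑ i, ((n i : ℂ) + ((v.1 i).val : ℂ) / 2) * ((v.2 i).val : ℂ)))

/-- Siegel upper half-space membership. -/
def IsSiegel {g : ℕ} (τ : Matrix (Fin g) (Fin g) ℂ) : Prop :=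
  τ.IsSymm ∧ Matrix.PosDef (τ.map Complex.im)

noncomputable def Pset {g : ℕ} (M : Set (ThetaChar g)) (τ : Matrix (Fin g) (Fin g) ℂ) : ℂ :=
  ∏ᶠ v ∈ M, theta v τ

noncomputable def Pform (g i s : ℕ) (τ : Matrix (Fin g) (Fin g) ℂ) : ℂ :=
  ∑ᶠ V ∈ {V : Submodule (ZMod 2) (ThetaChar g) | Module.finrank (ZMod 2) ↥V = i},
    Pset (V : Set (ThetaChar g)) τ ^ s

noncomputable def Nsub (n m i : ℕ) : ℕ :=
  Nat.card {V : Submodule (ZMod 2) ((Fin n → ZMod 2) × (Fin m → ZMod 2)) //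
    Module.finrank (ZMod 2) ↥V = i ∧
    V.map (LinearMap.fst (ZMod 2) (Fin n → ZMod 2) (Fin m → ZMod 2)) = ⊤ ∧
    V.map (LinearMap.snd (ZMod 2) (Fin n → ZMod 2) (Fin m → ZMod 2)) = ⊤}

noncomputable def blockDiag {k l : ℕ} (τ₁ : Matrix (Fin k) (Fin k) ℂ)
    (τ₂ : Matrix (Fin l) (Fin l) ℂ) : Matrix (Fin (k + l)) (Fin (k + l)) ℂ :=
  Matrix.reindex finSumFinEquiv finSumFinEquiv (Matrix.fromBlocks τ₁ 0 0 τ₂)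

def chproj1 (k l : ℕ) : ThetaChar (k + l) →ₗ[ZMod 2] ThetaChar k :=
  (LinearMap.funLeft (ZMod 2) (ZMod 2) (Fin.castAdd l)).prodMap
    (LinearMap.funLeft (ZMod 2) (ZMod 2) (Fin.castAdd l))

def chproj2 (k l : ℕ) : ThetaChar (k + l) →ₗ[ZMod 2] ThetaChar l :=
  (LinearMap.funLeft (ZMod 2) (ZMod 2) (Fin.natAdd k)).prodMap
    (LinearMap.funLeft (ZMod 2) (ZMod 2) (Fin.natAdd k))

def weil {g : ℕ} (v w : ThetaChar g) : ZMod 2 :=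
  (∑ i, v.1 i * w.2 i) + (∑ i, v.2 i * w.1 i)

def evenChar {g : ℕ} (v : ThetaChar g) : Prop := (∑ i, v.1 i * v.2 i) = 0

def qform {g : ℕ} (Δ v : ThetaChar g) : ZMod 2 :=
  (∑ i, v.1 i * v.2 i) + (∑ i, Δ.1 i * v.2 i) + (∑ i, Δ.2 i * v.1 i)

/-!
Fix a space `D` of dimension `n + m - i`. A linear map `E × F → D` is a pair `f : E → D`,
`g : F → D`, and its kernel projects onto both factors exactly when `f` and `g` have the same
range; so the surjections `E × F → D` whose kernel is one of the subspaces being counted are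
exactly the pairs of surjections `(f, g)`. On the other hand each such subspace is the kernel of
`|GL(D)|` surjections. Finally, surjections `E → D` correspond to linearly independent
`dim D`-tuples in the dual of `E`, and these are counted one vector at a time.
-/

open Function Module

section Kernels

variable {R E F D W : Type*} [Ring R] [AddCommGroup E] [Module R E] [AddCommGroup F] [Module R F]
  [AddCommGroup D] [Module R D] [AddCommGroup W] [Module R W]

/-- Submodules of a product projecting onto both factors (subdirect products of `E` and `F`). -/
def IsSubdirect (V : Submodule R (E × F)) : Prop :=
  V.map (LinearMap.fst R E F) = ⊤ ∧ V.map (LinearMap.snd R E F) = ⊤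

lemma map_fst_ker_coprod (f : E →ₗ[R] D) (g : F →ₗ[R] D) :
    (LinearMap.ker (f.coprod g)).map (LinearMap.fst R E F) = (LinearMap.range g).comap f := by
  ext x
  simp only [Submodule.mem_map, LinearMap.mem_ker, LinearMap.coprod_apply, LinearMap.fst_apply,
    Prod.exists, Submodule.mem_comap, LinearMap.mem_range]
  constructor
  · rintro ⟨_, y, hxy, rfl⟩
    exact ⟨-y, by rw [map_neg, eq_neg_of_add_eq_zero_left hxy]⟩
  · rintro ⟨y, hy⟩
    exact ⟨x, -y, by rw [map_neg, hy, add_neg_cancel], rfl⟩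

lemma map_snd_ker_coprod (f : E →ₗ[R] D) (g : F →ₗ[R] D) :
    (LinearMap.ker (f.coprod g)).map (LinearMap.snd R E F) = (LinearMap.range f).comap g := by
  ext y
  simp only [Submodule.mem_map, LinearMap.mem_ker, LinearMap.coprod_apply, LinearMap.snd_apply,
    Prod.exists, Submodule.mem_comap, LinearMap.mem_range]
  constructor
  · rintro ⟨x, _, hxy, rfl⟩
    exact ⟨-x, by rw [map_neg, eq_neg_of_add_eq_zero_right hxy]⟩
  · rintro ⟨x, hx⟩
    exact ⟨-x, y, by rw [map_neg, hx, neg_add_cancel], rfl⟩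

lemma isSubdirect_ker_coprod_iff (f : E →ₗ[R] D) (g : F →ₗ[R] D) :
    IsSubdirect (LinearMap.ker (f.coprod g)) ↔ LinearMap.range f = LinearMap.range g := by
  rw [IsSubdirect, map_fst_ker_coprod, map_snd_ker_coprod, ← LinearMap.range_le_iff_comap,
    ← LinearMap.range_le_iff_comap, le_antisymm_iff]

lemma surjective_coprod_and_isSubdirect_ker_iff (f : E →ₗ[R] D) (g : F →ₗ[R] D) :
    Surjective (f.coprod g) ∧ IsSubdirect (LinearMap.ker (f.coprod g)) ↔
      Surjective f ∧ Surjective g := by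
  simp only [isSubdirect_ker_coprod_iff, ← LinearMap.range_eq_top, LinearMap.range_coprod]
  constructor
  · rintro ⟨hsup, heq⟩
    rw [← heq, sup_idem] at hsup
    exact ⟨hsup, heq.symm.trans hsup⟩
  · rintro ⟨hf, hg⟩
    rw [hf, hg]
    exact ⟨sup_idem ⊤, rfl⟩

/-- The first isomorphism theorem as a bijection: a surjection with kernel `V` is the same as an
isomorphism from the quotient by `V`. -/
noncomputable def surjectiveWithKerEquiv (V : Submodule R W) :
    {f : W →ₗ[R] D // Surjective f ∧ LinearMap.ker f = V} ≃ ((W ⧸ V) ≃ₗ[R] D) where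
  toFun f := (Submodule.quotEquivOfEq V _ f.2.2.symm).trans
    (f.1.quotKerEquivOfSurjective f.2.1)
  invFun e := ⟨e.toLinearMap ∘ₗ V.mkQ, e.surjective.comp V.mkQ_surjective, by
    rw [LinearEquiv.ker_comp, Submodule.ker_mkQ]⟩
  left_inv _ := rfl
  right_inv e := by
    ext x
    obtain ⟨w, rfl⟩ := V.mkQ_surjective x
    rfl

lemma natCard_surjective_ker_mem (S : Set (Submodule R W))
    (hS : ∀ V ∈ S, Nonempty ((W ⧸ V) ≃ₗ[R] D)) :
    Nat.card {f : W →ₗ[R] D // Surjective f ∧ LinearMap.ker f ∈ S} =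
      Nat.card S * Nat.card (D ≃ₗ[R] D) := by
  let isoToAut (V : S) : ((W ⧸ V.1) ≃ₗ[R] D) ≃ (D ≃ₗ[R] D) :=
    let e := (hS V.1 V.2).some
    ⟨fun u => e.symm.trans u, fun a => e.trans a, fun u => by ext; simp, fun a => by ext; simp⟩
  rw [← Nat.card_prod]
  refine Nat.card_congr ?_
  calc {f : W →ₗ[R] D // Surjective f ∧ LinearMap.ker f ∈ S}
      ≃ {f : {f : W →ₗ[R] D // Surjective f} // LinearMap.ker f.1 ∈ S} :=
        (Equiv.subtypeSubtypeEquivSubtypeInter (fun f : W →ₗ[R] D => Surjective f)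
          (fun f => LinearMap.ker f ∈ S)).symm
    _ ≃ Σ V : S, {f : {f : W →ₗ[R] D // Surjective f} // LinearMap.ker f.1 = V} :=
        (Equiv.sigmaSubtypeFiberEquivSubtype
          (fun f : {f : W →ₗ[R] D // Surjective f} => LinearMap.ker f.1) fun _ => Iff.rfl).symm
    _ ≃ Σ _ : S, (D ≃ₗ[R] D) := Equiv.sigmaCongrRight fun V =>
        ((Equiv.subtypeSubtypeEquivSubtypeInter (fun f : W →ₗ[R] D => Surjective f)
          (fun f => LinearMap.ker f = V)).trans (surjectiveWithKerEquiv V.1)).trans (isoToAut V)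
    _ ≃ S × (D ≃ₗ[R] D) := Equiv.sigmaEquivProd _ _

lemma natCard_linearEquiv_self_eq_natCard_surjective [OrzechProperty R] [Module.Finite R D] :
    Nat.card (D ≃ₗ[R] D) = Nat.card {f : D →ₗ[R] D // Surjective f} :=
  Nat.card_eq_of_bijective (fun e => ⟨e.toLinearMap, e.surjective⟩)
    ⟨fun _ _ h => LinearEquiv.toLinearMap_injective (congrArg Subtype.val h),
      fun ⟨f, hf⟩ => ⟨.ofBijective f
        ⟨OrzechProperty.injective_of_surjective_endomorphism f hf, hf⟩, rfl⟩⟩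

end Kernels

section SubdirectCount

variable (K E F D : Type*) [Field K] [AddCommGroup E] [Module K E] [AddCommGroup F] [Module K F]
  [AddCommGroup D] [Module K D]

/-- The number of `i`-dimensional subspaces of `E × F` projecting onto both factors; `0` by
convention when there are infinitely many. `Nsub n m` is the case `E = 𝔽₂ⁿ`, `F = 𝔽₂ᵐ`. -/
noncomputable def subdirectCount (i : ℕ) : ℕ :=
  Nat.card {V : Submodule K (E × F) // finrank K V = i ∧ IsSubdirect V}

variable [FiniteDimensional K E] [FiniteDimensional K F]

variable {K E F} in
lemma IsSubdirect.finrank_fst_le {V : Submodule K (E × F)} (hV : IsSubdirect V) :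
    finrank K E ≤ finrank K V := by
  rw [← finrank_top K E, ← hV.1]
  exact Submodule.finrank_map_le _ V

variable {K E F} in
lemma IsSubdirect.finrank_snd_le {V : Submodule K (E × F)} (hV : IsSubdirect V) :
    finrank K F ≤ finrank K V := by
  rw [← finrank_top K F, ← hV.2]
  exact Submodule.finrank_map_le _ V

lemma subdirectCount_eq_zero_of_lt_finrank {i : ℕ} (h : i < finrank K E ∨ i < finrank K F) :
    subdirectCount K E F i = 0 := by
  have : IsEmpty {V : Submodule K (E × F) // finrank K V = i ∧ IsSubdirect V} :=
    ⟨fun ⟨_, hVi, hV⟩ => h.elim (hVi ▸ hV.finrank_fst_le).not_gt (hVi ▸ hV.finrank_snd_le).not_gt⟩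
  exact Nat.card_of_isEmpty

lemma subdirectCount_eq_zero_of_finrank_add_finrank_lt {i : ℕ}
    (h : finrank K E + finrank K F < i) : subdirectCount K E F i = 0 := by
  have : IsEmpty {V : Submodule K (E × F) // finrank K V = i ∧ IsSubdirect V} :=
    ⟨fun ⟨V, hVi, _⟩ => by
      have hle := V.finrank_le
      rw [finrank_prod] at hle
      omega⟩
  exact Nat.card_of_isEmpty

variable [FiniteDimensional K D]

lemma subdirectCount_mul_natCard_linearEquiv {i : ℕ}
    (hi : finrank K D + i = finrank K E + finrank K F) :
    subdirectCount K E F i * Nat.card (D ≃ₗ[K] D) =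
      Nat.card {f : E →ₗ[K] D // Surjective f} * Nat.card {g : F →ₗ[K] D // Surjective g} := by
  let S : Set (Submodule K (E × F)) := {V | finrank K V = i ∧ IsSubdirect V}
  have quotient_equiv : ∀ V ∈ S, Nonempty (((E × F) ⧸ V) ≃ₗ[K] D) := fun V hV =>
    FiniteDimensional.nonempty_linearEquiv_of_finrank_eq <| by
      have hquot := V.finrank_quotient_add_finrank
      rw [hV.1, finrank_prod] at hquot
      omega
  have surjective_iff (p : (E →ₗ[K] D) × (F →ₗ[K] D)) :
      Surjective p.1 ∧ Surjective p.2 ↔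
        Surjective (p.1.coprod p.2) ∧ LinearMap.ker (p.1.coprod p.2) ∈ S := by
    rw [← surjective_coprod_and_isSubdirect_ker_iff]
    refine and_congr_right fun hsurj => (and_iff_right ?_).symm
    have hrank := LinearMap.finrank_range_add_finrank_ker (p.1.coprod p.2)
    rw [LinearMap.range_eq_top.2 hsurj, finrank_top, finrank_prod] at hrank
    omega
  calc subdirectCount K E F i * Nat.card (D ≃ₗ[K] D)
      = Nat.card {h : E × F →ₗ[K] D // Surjective h ∧ LinearMap.ker h ∈ S} :=
        (natCard_surjective_ker_mem S quotient_equiv).symm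
    _ = Nat.card {p : (E →ₗ[K] D) × (F →ₗ[K] D) // Surjective p.1 ∧ Surjective p.2} :=
        (Nat.card_congr <| (LinearMap.coprodEquiv ℕ).toEquiv.subtypeEquiv surjective_iff).symm
    _ = Nat.card {f : E →ₗ[K] D // Surjective f} * Nat.card {g : F →ₗ[K] D // Surjective g} := by
        rw [← Nat.card_prod]
        exact Nat.card_congr <| Equiv.subtypeProdEquivProd
          (p := fun f : E →ₗ[K] D => Surjective f) (q := fun g : F →ₗ[K] D => Surjective g)

end SubdirectCount

section Surjections

variable {K E ι : Type*} [Field K] [AddCommGroup E] [Module K E]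

lemma surjective_pi_iff_linearIndependent [Finite ι] (φ : ι → Dual K E) :
    Surjective (LinearMap.pi φ) ↔ LinearIndependent K φ := by
  have range_flip : Set.range (flip fun j x => φ j x) = LinearMap.range (LinearMap.pi φ) := rfl
  rw [← LinearMap.range_eq_top, ← Submodule.span_eq (LinearMap.range _), ← range_flip,
    span_flip_eq_top_iff_linearIndependent]
  exact LinearMap.linearIndependent_iff_of_injOn (LinearMap.ltoFun K E K K)
    DFunLike.coe_injective.injOn

variable [Finite K] [FiniteDimensional K E]

variable (K E) in
lemma natCard_linearIndependent (d : ℕ) :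
    (Nat.card {s : Fin d → E // LinearIndependent K s} : ℤ) =
      ∏ j ∈ Finset.range d, ((Nat.card K : ℤ) ^ finrank K E - (Nat.card K : ℤ) ^ j) := by
  rcases le_or_gt d (finrank K E) with hd | hd
  · have := Fintype.ofFinite K
    have : Finite E := Module.finite_of_finite K
    have := Fintype.ofFinite E
    rw [card_linearIndependent hd, Finset.prod_range, Nat.cast_prod, Fintype.card_eq_nat_card]
    refine Finset.prod_congr rfl fun j _ => ?_
    rw [Nat.cast_sub (Nat.pow_le_pow_right Nat.card_pos (j.2.le.trans hd)), Nat.cast_pow,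
      Nat.cast_pow]
  · have : IsEmpty {s : Fin d → E // LinearIndependent K s} :=
      ⟨fun s => by simpa using s.2.fintype_card_le_finrank.trans_lt hd⟩
    rw [Nat.card_of_isEmpty, Finset.prod_eq_zero (Finset.mem_range.2 hd) (sub_self _),
      Nat.cast_zero]

variable (K E) in
lemma natCard_surjective_fin (d : ℕ) :
    (Nat.card {f : E →ₗ[K] Fin d → K // Surjective f} : ℤ) =
      ∏ j ∈ Finset.range d, ((Nat.card K : ℤ) ^ finrank K E - (Nat.card K : ℤ) ^ j) := by
  let familyEquiv : (Fin d → Dual K E) ≃ (E →ₗ[K] Fin d → K) :=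
    ⟨LinearMap.pi, fun f j => LinearMap.proj j ∘ₗ f, fun _ => rfl, fun _ => rfl⟩
  rw [← Subspace.dual_finrank_eq, ← natCard_linearIndependent]
  exact_mod_cast (Nat.card_congr <| familyEquiv.subtypeEquiv fun φ =>
    (surjective_pi_iff_linearIndependent φ).symm).symm

end Surjections

section FiniteField

variable (K E F : Type*) [Field K] [Finite K]
  [AddCommGroup E] [Module K E] [FiniteDimensional K E]
  [AddCommGroup F] [Module K F] [FiniteDimensional K F]

lemma subdirectCount_mul_prod {d i : ℕ} (hd : d + i = finrank K E + finrank K F) :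
    (subdirectCount K E F i : ℤ) *
        ∏ j ∈ Finset.range d, ((Nat.card K : ℤ) ^ d - (Nat.card K : ℤ) ^ j) =
      ∏ j ∈ Finset.range d, (((Nat.card K : ℤ) ^ finrank K E - (Nat.card K : ℤ) ^ j) *
        ((Nat.card K : ℤ) ^ finrank K F - (Nat.card K : ℤ) ^ j)) := by
  have hcount := subdirectCount_mul_natCard_linearEquiv K E F (Fin d → K) (i := i)
    (by rw [finrank_fin_fun, hd])
  rw [natCard_linearEquiv_self_eq_natCard_surjective] at hcount
  have hself := natCard_surjective_fin K (Fin d → K) d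
  rw [finrank_fin_fun] at hself
  rw [Finset.prod_mul_distrib, ← natCard_surjective_fin, ← natCard_surjective_fin, ← hself]
  exact_mod_cast hcount

lemma subdirectCount_finrank_add_finrank :
    subdirectCount K E F (finrank K E + finrank K F) = 1 := by
  simpa using subdirectCount_mul_prod K E F (zero_add (finrank K E + finrank K F))

theorem Nsub_count_formula_general (i : ℕ) :
    (i ≤ finrank K E + finrank K F →
      (subdirectCount K E F i : ℤ) *
          ∏ j ∈ Finset.range (finrank K E + finrank K F - i),
            ((Nat.card K : ℤ) ^ (finrank K E + finrank K F - i) - (Nat.card K : ℤ) ^ j) =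
        ∏ j ∈ Finset.range (finrank K E + finrank K F - i),
          (((Nat.card K : ℤ) ^ finrank K E - (Nat.card K : ℤ) ^ j) *
            ((Nat.card K : ℤ) ^ finrank K F - (Nat.card K : ℤ) ^ j))) ∧
    subdirectCount K E F (finrank K E + finrank K F) = 1 ∧
    (finrank K E + finrank K F < i → subdirectCount K E F i = 0) ∧
    (i < finrank K E ∨ i < finrank K F → subdirectCount K E F i = 0) :=
  ⟨fun hi => subdirectCount_mul_prod K E F (Nat.sub_add_cancel hi),
    subdirectCount_finrank_add_finrank K E F,
    subdirectCount_eq_zero_of_finrank_add_finrank_lt K E F,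
    subdirectCount_eq_zero_of_lt_finrank K E F⟩

end FiniteField

theorem Nsub_count_formula (n m i : ℕ) :
    (i ≤ n + m →
      (Nsub n m i : ℤ) * ∏ j ∈ Finset.range (n + m - i), ((2 : ℤ) ^ (n + m - i) - 2 ^ j) =
        ∏ j ∈ Finset.range (n + m - i), (((2 : ℤ) ^ n - 2 ^ j) * ((2 : ℤ) ^ m - 2 ^ j))) ∧
    Nsub n m (n + m) = 1 ∧
    (n + m < i → Nsub n m i = 0) ∧
    ((n > i ∨ m > i) → i < n + m → Nsub n m i = 0) := by
  have h := Nsub_count_formula_general (ZMod 2) (Fin n → ZMod 2) (Fin m → ZMod 2) i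
  simp only [finrank_fin_fun, Nat.card_zmod, Nat.cast_ofNat] at h
  exact ⟨h.1, h.2.1, h.2.2.1, fun hi _ => h.2.2.2 hi⟩
end

section
/- For every τ₁, τ₂ ∈ ℍ₁ (complex numbers with positive imaginary part), the genus 2 ansatz factors on the decomposable locus: Ξ^{(2)}(τ₁ ⊕ τ₂) = Ξ^{(1)}(τ₁) · Ξ^{(1)}(τ₂), where τ₁ ⊕ τ₂ is the diagonal 2×2 period matrix with entries τ₁, τ₂. -/
open scoped BigOperators

noncomputable def Gform (g i : ℕ) (τ : Matrix (Fin g) (Fin g) ℂ) : ℂ :=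
  Pform g i (2 ^ (4 - i)) τ

noncomputable def Xi1 (τ : Matrix (Fin 1) (Fin 1) ℂ) : ℂ :=
  (1 / 2) * (Gform 1 0 τ - Gform 1 1 τ)

noncomputable def Xi2 (τ : Matrix (Fin 2) (Fin 2) ℂ) : ℂ :=
  (1 / 4) * (Gform 2 0 τ - Gform 2 1 τ + 2 * Gform 2 2 τ)

noncomputable def Xi3 (τ : Matrix (Fin 3) (Fin 3) ℂ) : ℂ :=
  (1 / 8) * (Gform 3 0 τ - Gform 3 1 τ + 2 * Gform 3 2 τ - 8 * Gform 3 3 τ)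

noncomputable def Xi4 (τ : Matrix (Fin 4) (Fin 4) ℂ) : ℂ :=
  (1 / 16) * (Gform 4 0 τ - Gform 4 1 τ + 2 * Gform 4 2 τ - 8 * Gform 4 3 τ +
    64 * Gform 4 4 τ)

/-!
On a block-diagonal period matrix `τ₁ ⊕ τ₂` a theta constant is the product of the theta constants
of the two projections of its characteristic. Hence `P_V(τ₁ ⊕ τ₂)` is a product of powers of
`P_{V₁}(τ₁)` and `P_{V₂}(τ₂)`, where `V₁`, `V₂` are the projections of `V`, and the exponents match
those built into `G_i`. The number of `i`-dimensional `V` with given projections of dimensions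
`n`, `m` is `N_{n,m;i} = Nsub n m i`, so that
`G_i(τ₁ ⊕ τ₂) = ∑ N_{n,m;i} G_n(τ₁) G_m(τ₂)`.

A subspace consisting of even characteristics is isotropic for the Weil pairing, so its dimension
is at most the genus; since odd theta constants vanish, `G₂ = 0` in genus one. With
`N_{0,0;0} = N_{0,1;1} = N_{1,0;1} = N_{1,1;1} = N_{1,1;2} = 1` this gives
`G₀ - G₁ + 2 G₂ = (G₀ - G₁)(τ₁) * (G₀ - G₁)(τ₂)`.
-/

section ThetaConstants

open scoped MatrixOrder in
lemma exists_pos_mul_dotProduct_le_of_posDef {ι : Type*} [Fintype ι] {Y : Matrix ι ι ℝ}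
    (hY : Y.PosDef) :
    ∃ c > 0, ∀ x : ι → ℝ, c * (x ⬝ᵥ x) ≤ x ⬝ᵥ Y.mulVec x := by
  classical
  cases isEmpty_or_nonempty ι
  · exact ⟨1, one_pos, by simp⟩
  obtain ⟨c, hc, hcY⟩ := (CFC.exists_pos_algebraMap_le_iff hY.isHermitian).2
    fun _ hx => hY.isStrictlyPositive.spectrum_pos hx
  refine ⟨c, hc, fun x => ?_⟩
  simpa [Algebra.algebraMap_eq_smul_one, Matrix.sub_mulVec, dotProduct_sub, Matrix.smul_mulVec]
    using (Matrix.le_iff.1 hcY).dotProduct_mulVec_nonneg x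

lemma summable_prod_apply {α : Type*} : ∀ {g : ℕ} {f : Fin g → α → ℝ},
    (∀ i a, 0 ≤ f i a) → (∀ i, Summable (f i)) → Summable fun x : Fin g → α => ∏ i, f i (x i)
  | 0, _, _, _ => Summable.of_finite
  | g + 1, f, hf0, hf => by
    have ih := summable_prod_apply (fun i => hf0 (Fin.succ i)) fun i => hf i.succ
    rw [← (Fin.consEquiv fun _ => α).summable_iff]
    convert (hf 0).mul_of_nonneg ih (hf0 0) (fun x => Finset.prod_nonneg fun i _ => hf0 _ _) using 2
    simp [Fin.consEquiv, Fin.prod_univ_succ]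

lemma summable_exp_neg_pi_mul_add_sq {c : ℝ} (hc : 0 < c) (a : ℝ) :
    Summable fun n : ℤ => Real.exp (-Real.pi * (c * (n + a) ^ 2)) := by
  -- Up to a constant this is the norm of the Jacobi theta term with parameters `z = cai`, `τ = ci`.
  have hsum := ((summable_jacobiTheta₂_term_iff (c * a * Complex.I) (c * Complex.I)).2
    (by simpa using hc)).norm.mul_left (Real.exp (-Real.pi * (c * a ^ 2)))
  refine hsum.congr fun n => ?_
  rw [norm_jacobiTheta₂_term, ← Real.exp_add]
  simp only [Complex.mul_I_im, Complex.re_ofReal_mul, Complex.ofReal_re]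
  ring_nf

/-- The `n`-th summand of the series defining `theta v τ`. -/
noncomputable def thetaTerm {g : ℕ} (v : ThetaChar g) (τ : Matrix (Fin g) (Fin g) ℂ)
    (n : Fin g → ℤ) : ℂ :=
  Complex.exp ((Real.pi : ℂ) * Complex.I *
    ((∑ i, ∑ j, ((n i : ℂ) + ((v.1 i).val : ℂ) / 2) * τ i j *
        ((n j : ℂ) + ((v.1 j).val : ℂ) / 2)) +
      ∑ i, ((n i : ℂ) + ((v.1 i).val : ℂ) / 2) * ((v.2 i).val : ℂ)))

variable {g k l : ℕ}

lemma norm_thetaTerm (v : ThetaChar g) (τ : Matrix (Fin g) (Fin g) ℂ) (n : Fin g → ℤ) :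
    ‖thetaTerm v τ n‖ = Real.exp (-Real.pi *
      ((fun i => (n i + (v.1 i).val / 2 : ℝ)) ⬝ᵥ
        (τ.map Complex.im).mulVec fun i => (n i + (v.1 i).val / 2 : ℝ))) := by
  set x : Fin g → ℝ := fun i => n i + (v.1 i).val / 2 with hx
  have hcast : ∀ i, (n i : ℂ) + ((v.1 i).val : ℂ) / 2 = (x i : ℂ) := fun i => by
    simp only [hx]; push_cast; rfl
  have hquad : (∑ i, ∑ j, (x i : ℂ) * τ i j * x j).im = x ⬝ᵥ (τ.map Complex.im).mulVec x := by
    simp [dotProduct, Matrix.mulVec, Finset.mul_sum, mul_assoc]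
  have hlin : (∑ i, (x i : ℂ) * ((v.2 i).val : ℂ)).im = 0 := by
    simp [-ZMod.natCast_val]
  simp only [thetaTerm, hcast]
  rw [Complex.norm_exp, mul_assoc, Complex.re_ofReal_mul, Complex.I_mul_re, Complex.add_im,
    hquad, hlin, add_zero, mul_neg, neg_mul]

lemma summable_norm_thetaTerm (v : ThetaChar g) {τ : Matrix (Fin g) (Fin g) ℂ}
    (hτ : (τ.map Complex.im).PosDef) : Summable fun n => ‖thetaTerm v τ n‖ := by
  obtain ⟨c, hc, hcoer⟩ := exists_pos_mul_dotProduct_le_of_posDef hτ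
  refine Summable.of_nonneg_of_le (fun _ => norm_nonneg _) (fun n => ?_)
    (summable_prod_apply (fun _ _ => (Real.exp_pos _).le)
      fun i => summable_exp_neg_pi_mul_add_sq hc ((v.1 i).val / 2))
  rw [norm_thetaTerm, ← Real.exp_sum, Real.exp_le_exp, ← Finset.mul_sum, neg_mul, neg_mul,
    neg_le_neg_iff]
  gcongr
  simpa [dotProduct, Finset.mul_sum, sq] using hcoer fun i => n i + (v.1 i).val / 2

lemma thetaTerm_blockDiag (v : ThetaChar (k + l)) (τ₁ : Matrix (Fin k) (Fin k) ℂ)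
    (τ₂ : Matrix (Fin l) (Fin l) ℂ) (n : Fin k → ℤ) (m : Fin l → ℤ) :
    thetaTerm v (blockDiag τ₁ τ₂) (Fin.append n m) =
      thetaTerm (chproj1 k l v) τ₁ n * thetaTerm (chproj2 k l v) τ₂ m := by
  simp only [thetaTerm, ← Complex.exp_add, Fin.sum_univ_add, blockDiag, chproj1, chproj2]
  simp only [Fin.append_left, Fin.append_right, Matrix.reindex_apply, Matrix.submatrix_apply,
    finSumFinEquiv_symm_apply_castAdd, finSumFinEquiv_symm_apply_natAdd,
    Matrix.fromBlocks_apply₁₁, Matrix.fromBlocks_apply₁₂, Matrix.fromBlocks_apply₂₁,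
    Matrix.fromBlocks_apply₂₂, Matrix.zero_apply, mul_zero, zero_mul, Finset.sum_const_zero,
    add_zero, zero_add, LinearMap.prodMap_apply, LinearMap.funLeft_apply]
  ring_nf

theorem theta_blockDiag (v : ThetaChar (k + l)) {τ₁ : Matrix (Fin k) (Fin k) ℂ}
    {τ₂ : Matrix (Fin l) (Fin l) ℂ} (hτ₁ : (τ₁.map Complex.im).PosDef)
    (hτ₂ : (τ₂.map Complex.im).PosDef) :
    theta v (blockDiag τ₁ τ₂) = theta (chproj1 k l v) τ₁ * theta (chproj2 k l v) τ₂ :=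
  calc
    _ = ∑' p : (Fin k → ℤ) × (Fin l → ℤ), thetaTerm v (blockDiag τ₁ τ₂) (Fin.append p.1 p.2) :=
        ((Fin.appendEquiv k l).tsum_eq _).symm
    _ = ∑' p : (Fin k → ℤ) × (Fin l → ℤ),
          thetaTerm (chproj1 k l v) τ₁ p.1 * thetaTerm (chproj2 k l v) τ₂ p.2 := by
        simp only [thetaTerm_blockDiag]
    _ = _ := (tsum_mul_tsum_of_summable_norm (summable_norm_thetaTerm _ hτ₁)
        (summable_norm_thetaTerm _ hτ₂)).symm

lemma exp_neg_two_mul_sum_eq_neg_one_of_not_evenChar {v : ThetaChar g} (hv : ¬ evenChar v)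
    (n : Fin g → ℤ) :
    Complex.exp (Real.pi * Complex.I *
      (-2 * ∑ i, ((n i : ℂ) + ((v.1 i).val : ℂ) / 2) * ((v.2 i).val : ℂ))) = -1 := by
  have hodd : Odd (∑ i, (v.1 i).val * (v.2 i).val) := by
    rw [← ZMod.natCast_ne_zero_iff_odd]
    simpa [evenChar] using hv
  obtain ⟨r, hr⟩ := hodd
  have hsum : (∑ i, ((v.1 i).val * (v.2 i).val : ℂ)) = 2 * r + 1 := by exact_mod_cast hr
  have hexponent : Real.pi * Complex.I *
        (-2 * ∑ i, ((n i : ℂ) + ((v.1 i).val : ℂ) / 2) * ((v.2 i).val : ℂ)) =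
      ((-r - 1 - ∑ i, n i * (v.2 i).val : ℤ) : ℂ) * (2 * Real.pi * Complex.I) +
        Real.pi * Complex.I := by
    simp only [add_mul, Finset.sum_add_distrib, div_mul_eq_mul_div, ← Finset.sum_div, hsum]
    push_cast
    ring
  rw [hexponent, Complex.exp_add, Complex.exp_int_mul_two_pi_mul_I, Complex.exp_pi_mul_I, one_mul]

-- The reflection `n ↦ -ε - n` negates `n + ε / 2`: it preserves the quadratic part of the exponent
-- and shifts the linear part by an odd multiple of `πi`.
lemma thetaTerm_neg_sub {v : ThetaChar g} (hv : ¬ evenChar v) (τ : Matrix (Fin g) (Fin g) ℂ)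
    (n : Fin g → ℤ) :
    thetaTerm v τ ((fun i => -((v.1 i).val : ℤ)) - n) = -thetaTerm v τ n := by
  have hflip : ∀ i, ((-((v.1 i).val : ℤ) - n i : ℤ) : ℂ) + ((v.1 i).val : ℂ) / 2 =
      -((n i : ℂ) + ((v.1 i).val : ℂ) / 2) := fun i => by push_cast; ring
  simp only [thetaTerm, Pi.sub_apply, hflip]
  rw [neg_eq_neg_one_mul, ← exp_neg_two_mul_sum_eq_neg_one_of_not_evenChar hv n,
    ← Complex.exp_add]
  simp only [neg_mul, mul_neg, neg_neg, Finset.sum_neg_distrib]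
  ring_nf

theorem theta_eq_zero_of_not_evenChar {v : ThetaChar g} (hv : ¬ evenChar v)
    (τ : Matrix (Fin g) (Fin g) ℂ) : theta v τ = 0 := by
  refine self_eq_neg.1 ?_
  calc theta v τ = ∑' n, thetaTerm v τ ((fun i => -((v.1 i).val : ℤ)) - n) :=
        ((Equiv.subLeft _).tsum_eq _).symm
    _ = -theta v τ := by simp only [thetaTerm_neg_sub hv, tsum_neg]; rfl

end ThetaConstants

section Subspaces

open Module

lemma prod_comp_eq_pow_card_ker {A B R : Type*} [AddGroup A] [AddGroup B] [Fintype A] [Fintype B]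
    [CommMonoid R] {f : A →+ B} (hf : Function.Surjective f) (F : B → R) :
    ∏ a, F (f a) = (∏ b, F b) ^ Nat.card f.ker := by
  classical
  have hfiber : ∀ b, Fintype.card {a // f a = b} = Nat.card f.ker := fun b => by
    rw [Fintype.card_subtype, AddMonoidHom.card_fiber_eq_of_mem_range f (hf b) ⟨0, map_zero f⟩,
      ← Fintype.card_subtype, ← Nat.card_eq_fintype_card]
    rfl
  simp only [← Fintype.prod_fiberwise' f, Finset.prod_const, Finset.card_univ, hfiber,
    Finset.prod_pow]

lemma finprod_mem_comp_eq_pow {K M N R : Type*} [DivisionRing K] [AddCommGroup M]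
    [Module K M] [AddCommGroup N] [Module K N] [Finite M] [CommMonoid R] (f : M →ₗ[K] N)
    (V : Submodule K M) (F : N → R) :
    ∏ᶠ v ∈ (V : Set M), F (f v) =
      (∏ᶠ w ∈ (V.map f : Set N), F w) ^ Nat.card K ^ (finrank K V - finrank K (V.map f)) := by
  have : Finite (V.map f) := (Set.toFinite (V : Set M)).image f
  have := Fintype.ofFinite V
  have := Fintype.ofFinite (V.map f)
  have : Module.Finite K V := Module.Finite.of_finite
  have hsurj := f.submoduleMap_surjective V
  have hker : Nat.card (f.submoduleMap V).toAddMonoidHom.ker =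
      Nat.card K ^ (finrank K V - finrank K (V.map f)) := by
    have hrank := (f.submoduleMap V).finrank_range_add_finrank_ker
    rw [LinearMap.range_eq_top.2 hsurj, finrank_top] at hrank
    rw [← hrank, Nat.add_sub_cancel_left, ← Module.natCard_eq_pow_finrank]
    rfl
  rw [← finprod_set_coe_eq_finprod_mem, ← finprod_set_coe_eq_finprod_mem, ← hker]
  have hprod := prod_comp_eq_pow_card_ker (f := (f.submoduleMap V).toAddMonoidHom) hsurj
    fun w => F w
  rwa [← finprod_eq_prod_of_fintype, ← finprod_eq_prod_of_fintype] at hprod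

section Gluing

variable {R M M₁ M₂ E₁ E₂ : Type*} [Ring R] [AddCommGroup M]
  [AddCommGroup M₁] [AddCommGroup M₂] [AddCommGroup E₁] [AddCommGroup E₂]
  [Module R M] [Module R M₁] [Module R M₂] [Module R E₁] [Module R E₂]
  {f₁ : M →ₗ[R] M₁} {f₂ : M →ₗ[R] M₂} {ι₁ : E₁ →ₗ[R] M₁} {ι₂ : E₂ →ₗ[R] M₂}

lemma exists_injective_lift_prodMap (hf : Function.Bijective (f₁.prod f₂))
    (hι₁ : Function.Injective ι₁) (hι₂ : Function.Injective ι₂) :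
    ∃ j : E₁ × E₂ →ₗ[R] M, Function.Injective j ∧
      f₁ ∘ₗ j = ι₁ ∘ₗ LinearMap.fst R E₁ E₂ ∧ f₂ ∘ₗ j = ι₂ ∘ₗ LinearMap.snd R E₁ E₂ := by
  let e := LinearEquiv.ofBijective (f₁.prod f₂) hf
  have he : ∀ x, (f₁ (e.symm x), f₂ (e.symm x)) = x := e.apply_symm_apply
  refine ⟨e.symm.toLinearMap ∘ₗ ι₁.prodMap ι₂, e.symm.injective.comp (hι₁.prodMap hι₂),
    LinearMap.ext fun x => ?_, LinearMap.ext fun x => ?_⟩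
  · exact congrArg Prod.fst (he (ι₁.prodMap ι₂ x))
  · exact congrArg Prod.snd (he (ι₁.prodMap ι₂ x))

lemma card_submodule_map_eq_range (hf : Function.Bijective (f₁.prod f₂))
    (hι₁ : Function.Injective ι₁) (hι₂ : Function.Injective ι₂) (i : ℕ) :
    Nat.card {V : Submodule R M // finrank R V = i ∧
        V.map f₁ = LinearMap.range ι₁ ∧ V.map f₂ = LinearMap.range ι₂} =
      Nat.card {V : Submodule R (E₁ × E₂) // finrank R V = i ∧
        V.map (LinearMap.fst R E₁ E₂) = ⊤ ∧ V.map (LinearMap.snd R E₁ E₂) = ⊤} := by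
  obtain ⟨j, hj, hj₁, hj₂⟩ := exists_injective_lift_prodMap hf hι₁ hι₂
  have hmap : ∀ V : Submodule R (E₁ × E₂),
      (finrank R (V.map j) = i ∧
        (V.map j).map f₁ = LinearMap.range ι₁ ∧ (V.map j).map f₂ = LinearMap.range ι₂) ↔
      finrank R V = i ∧
        V.map (LinearMap.fst R E₁ E₂) = ⊤ ∧ V.map (LinearMap.snd R E₁ E₂) = ⊤ := fun V => by
    rw [← (V.equivMapOfInjective j hj).finrank_eq, ← Submodule.map_comp, ← Submodule.map_comp,
      hj₁, hj₂, Submodule.map_comp, Submodule.map_comp, LinearMap.range_eq_map,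
      LinearMap.range_eq_map, (Submodule.map_injective_of_injective hι₁).eq_iff,
      (Submodule.map_injective_of_injective hι₂).eq_iff]
  have hle : ∀ V : Submodule R M, V.map f₁ = LinearMap.range ι₁ → V.map f₂ = LinearMap.range ι₂ →
      V ≤ LinearMap.range j := fun V h₁ h₂ v hv => by
    obtain ⟨x, hx⟩ : f₁ v ∈ LinearMap.range ι₁ := h₁ ▸ Submodule.mem_map_of_mem hv
    obtain ⟨y, hy⟩ : f₂ v ∈ LinearMap.range ι₂ := h₂ ▸ Submodule.mem_map_of_mem hv
    refine ⟨(x, y), hf.injective (Prod.ext ?_ ?_)⟩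
    · exact (LinearMap.congr_fun hj₁ (x, y)).trans hx
    · exact (LinearMap.congr_fun hj₂ (x, y)).trans hy
  refine (Nat.card_eq_of_bijective (fun V => ⟨V.1.map j, (hmap V).2 V.2⟩)
    ⟨fun V W hVW => ?_, ?_⟩).symm
  · exact Subtype.ext (Submodule.map_injective_of_injective hj (congrArg Subtype.val hVW))
  · rintro ⟨V, hV⟩
    have hVj : (V.comap j).map j = V :=
      Submodule.map_comap_eq_of_le (hle V hV.2.1 hV.2.2)
    exact ⟨⟨V.comap j, (hmap _).1 (hVj.symm ▸ hV)⟩, Subtype.ext hVj⟩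

end Gluing

lemma card_submodule_map_eq_Nsub {M M₁ M₂ : Type*} [AddCommGroup M] [AddCommGroup M₁]
    [AddCommGroup M₂] [Module (ZMod 2) M] [Module (ZMod 2) M₁] [Module (ZMod 2) M₂] [Finite M₁]
    [Finite M₂] {f₁ : M →ₗ[ZMod 2] M₁} {f₂ : M →ₗ[ZMod 2] M₂}
    (hf : Function.Bijective (f₁.prod f₂)) (W₁ : Submodule (ZMod 2) M₁)
    (W₂ : Submodule (ZMod 2) M₂) (i : ℕ) :
    Nat.card {V : Submodule (ZMod 2) M //
        finrank (ZMod 2) V = i ∧ V.map f₁ = W₁ ∧ V.map f₂ = W₂} =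
      Nsub (finrank (ZMod 2) W₁) (finrank (ZMod 2) W₂) i := by
  have : Module.Finite (ZMod 2) W₁ := Module.Finite.of_finite
  have : Module.Finite (ZMod 2) W₂ := Module.Finite.of_finite
  let b₁ := (finBasis (ZMod 2) W₁).equivFun.symm
  let b₂ := (finBasis (ZMod 2) W₂).equivFun.symm
  have hrange₁ : LinearMap.range (W₁.subtype ∘ₗ b₁.toLinearMap) = W₁ := by
    rw [LinearMap.range_comp, b₁.range, Submodule.map_top, Submodule.range_subtype]
  have hrange₂ : LinearMap.range (W₂.subtype ∘ₗ b₂.toLinearMap) = W₂ := by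
    rw [LinearMap.range_comp, b₂.range, Submodule.map_top, Submodule.range_subtype]
  have hcard := card_submodule_map_eq_range (ι₁ := W₁.subtype ∘ₗ b₁.toLinearMap)
    (ι₂ := W₂.subtype ∘ₗ b₂.toLinearMap) hf (W₁.subtype_injective.comp b₁.injective)
    (W₂.subtype_injective.comp b₂.injective) i
  rwa [hrange₁, hrange₂] at hcard

lemma Nsub_eq_zero_of_lt {n m i : ℕ} (h : n + m < i) : Nsub n m i = 0 := by
  rw [Nsub, Nat.card_eq_zero]
  refine .inl ⟨fun ⟨V, hV, _⟩ => ?_⟩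
  have hle := V.finrank_le
  simp only [finrank_prod, finrank_fin_fun] at hle
  omega

lemma Nsub_add (n m : ℕ) : Nsub n m (n + m) = 1 := by
  have htop : ∀ V : Submodule (ZMod 2) ((Fin n → ZMod 2) × (Fin m → ZMod 2)),
      finrank (ZMod 2) V = n + m → V = ⊤ := fun V hV =>
    Submodule.eq_top_of_finrank_eq (by simp [hV])
  rw [Nsub, Nat.card_eq_one_iff_unique]
  refine ⟨⟨fun V W => Subtype.ext ((htop V V.2.1).trans (htop W W.2.1).symm)⟩, ⟨⊤, ?_, ?_, ?_⟩⟩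
  · simp
  · simp
  · simp

lemma exists_eq_graph_of_map_eq_top {K E : Type*} [DivisionRing K] [AddCommGroup E]
    [Module K E] [FiniteDimensional K E] {V : Submodule K (E × E)} (hV : finrank K V = finrank K E)
    (hfst : V.map (LinearMap.fst K E E) = ⊤) (hsnd : V.map (LinearMap.snd K E E) = ⊤) :
    ∃ e : E ≃ₗ[K] E, V = e.toLinearMap.graph := by
  have hbij : ∀ p : E × E →ₗ[K] E, V.map p = ⊤ → Function.Bijective (p ∘ₗ V.subtype) :=
      fun p hp => by
    have hsurj : Function.Surjective (p ∘ₗ V.subtype) := by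
      rw [← LinearMap.range_eq_top, LinearMap.range_comp, Submodule.range_subtype, hp]
    exact ⟨(LinearMap.injective_iff_surjective_of_finrank_eq_finrank hV).2 hsurj, hsurj⟩
  exact Submodule.exists_equiv_eq_graph (hbij _ hfst) (hbij _ hsnd)

lemma finrank_graph {K E F : Type*} [DivisionRing K] [AddCommGroup E] [Module K E]
    [AddCommGroup F] [Module K F] (f : E →ₗ[K] F) : finrank K f.graph = finrank K E := by
  rw [LinearMap.graph_eq_range_prod, LinearMap.finrank_range_of_inj]
  exact fun x y h => congrArg Prod.fst h

lemma Nsub_self (n : ℕ) : Nsub n n n = ∏ j : Fin n, (2 ^ n - 2 ^ (j : ℕ)) := by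
  have hcard : Nat.card ((Fin n → ZMod 2) ≃ₗ[ZMod 2] (Fin n → ZMod 2)) = Nsub n n n := by
    refine Nat.card_eq_of_bijective (fun e => ⟨e.toLinearMap.graph, ?_, ?_, ?_⟩) ⟨?_, ?_⟩
    · simp [finrank_graph]
    · exact Submodule.eq_top_iff'.2 fun x => ⟨(x, e x), by simp, rfl⟩
    · exact Submodule.eq_top_iff'.2 fun y => ⟨(e.symm y, y), by simp, rfl⟩
    · intro e e' h
      ext1 x
      have hgraph : e.toLinearMap.graph = e'.toLinearMap.graph := congrArg Subtype.val h
      have hmem : (x, e x) ∈ e.toLinearMap.graph := by simp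
      simpa [hgraph] using hmem
    · rintro ⟨V, hV, hfst, hsnd⟩
      obtain ⟨e, rfl⟩ := exists_eq_graph_of_map_eq_top (by simpa using hV) hfst hsnd
      exact ⟨e, rfl⟩
  rw [← hcard, ← Nat.card_congr (LinearMap.GeneralLinearGroup.generalLinearEquiv _ _).toEquiv,
    ← Nat.card_congr (Matrix.GeneralLinearGroup.toLin (n := Fin n) (R := ZMod 2)).toEquiv,
    Matrix.card_GL_field, ZMod.card]

end Subspaces

section WeilPairing

open Module

variable {g : ℕ}

/-- The Weil pairing `weil` on characteristics as a bilinear form over `𝔽₂`. -/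
def weilForm (g : ℕ) : LinearMap.BilinForm (ZMod 2) (ThetaChar g) :=
  LinearMap.mk₂ (ZMod 2) weil
    (fun u v w => by
      simp only [weil, Prod.fst_add, Prod.snd_add, Pi.add_apply, add_mul, Finset.sum_add_distrib]
      ring)
    (fun c v w => by simp [weil, mul_assoc, Finset.mul_sum, mul_add])
    (fun u v w => by
      simp only [weil, Prod.fst_add, Prod.snd_add, Pi.add_apply, mul_add, Finset.sum_add_distrib]
      ring)
    (fun c v w => by simp [weil, mul_left_comm, Finset.mul_sum, mul_add])

lemma weilForm_nondegenerate (g : ℕ) : (weilForm g).Nondegenerate := by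
  have hrefl : (weilForm g).IsRefl := fun v w h => by
    rw [← h]
    simp only [weilForm, LinearMap.mk₂_apply, weil, mul_comm, add_comm]
  refine hrefl.nondegenerate_iff_separatingLeft.2 fun v hv => ?_
  ext i
  · simpa [weilForm, weil, Pi.single_apply] using hv (0, Pi.single i 1)
  · simpa [weilForm, weil, Pi.single_apply] using hv (Pi.single i 1, 0)

lemma weil_eq_zero_of_evenChar {v w : ThetaChar g} (hv : evenChar v) (hw : evenChar w)
    (hvw : evenChar (v + w)) : weil v w = 0 := by
  simp only [evenChar, Prod.fst_add, Prod.snd_add, Pi.add_apply, add_mul, mul_add,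
    Finset.sum_add_distrib] at hv hw hvw
  simp only [weil, mul_comm (v.2 _)]
  linear_combination hvw - hv - hw

lemma finrank_le_of_forall_evenChar {V : Submodule (ZMod 2) (ThetaChar g)}
    (hV : ∀ v ∈ V, evenChar v) : finrank (ZMod 2) V ≤ g := by
  have hle : V ≤ (weilForm g).orthogonal V := fun v hv w hw =>
    weil_eq_zero_of_evenChar (hV w hw) (hV v hv) (hV _ (V.add_mem hw hv))
  have hrank := Submodule.finrank_mono hle
  rw [LinearMap.BilinForm.finrank_orthogonal (weilForm_nondegenerate g), finrank_prod,
    finrank_fin_fun] at hrank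
  omega

lemma Pset_eq_zero_of_lt_finrank {V : Submodule (ZMod 2) (ThetaChar g)}
    (hV : g < finrank (ZMod 2) V) (τ : Matrix (Fin g) (Fin g) ℂ) :
    Pset (V : Set (ThetaChar g)) τ = 0 := by
  obtain ⟨v, hvV, hv⟩ : ∃ v ∈ V, ¬ evenChar v := by
    contrapose! hV
    exact finrank_le_of_forall_evenChar hV
  rw [Pset, finprod_mem_eq_finite_toFinset_prod _ (Set.toFinite _)]
  exact Finset.prod_eq_zero (by simpa using hvV) (theta_eq_zero_of_not_evenChar hv τ)

theorem Pform_eq_zero_of_lt {i s : ℕ} (hi : g < i) (hs : s ≠ 0) (τ : Matrix (Fin g) (Fin g) ℂ) :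
    Pform g i s τ = 0 :=
  finsum_mem_eq_zero_of_forall_eq_zero fun V hV => by
    rw [Pset_eq_zero_of_lt_finrank (hV.symm ▸ hi), zero_pow hs]

end WeilPairing

section BlockDiagonal

open Module

variable {g k l : ℕ}

lemma bijective_chproj1_prod_chproj2 (k l : ℕ) :
    Function.Bijective ((chproj1 k l).prod (chproj2 k l)) := by
  refine ⟨fun v w h => ?_, fun ⟨v, w⟩ => ⟨(Fin.append v.1 w.1, Fin.append v.2 w.2), ?_⟩⟩
  · obtain ⟨h₁, h₂⟩ := Prod.ext_iff.1 h
    ext i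
    · exact Fin.addCases (fun i => congrFun (congrArg Prod.fst h₁) i)
        (fun i => congrFun (congrArg Prod.fst h₂) i) i
    · exact Fin.addCases (fun i => congrFun (congrArg Prod.snd h₁) i)
        (fun i => congrFun (congrArg Prod.snd h₂) i) i
  · ext <;> simp [chproj1, chproj2, LinearMap.funLeft_apply]

/-- The finite set of `i`-dimensional subspaces of the space of genus `g` characteristics, over
which `Pform` sums. -/
noncomputable def subspaces (g i : ℕ) : Finset (Submodule (ZMod 2) (ThetaChar g)) :=
  (Set.toFinite {V : Submodule (ZMod 2) (ThetaChar g) | finrank (ZMod 2) V = i}).toFinset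

lemma mem_subspaces {i : ℕ} {V : Submodule (ZMod 2) (ThetaChar g)} :
    V ∈ subspaces g i ↔ finrank (ZMod 2) V = i := by
  simp [subspaces]

lemma Pform_eq_sum_subspaces (g i s : ℕ) (τ : Matrix (Fin g) (Fin g) ℂ) :
    Pform g i s τ = ∑ V ∈ subspaces g i, Pset (V : Set (ThetaChar g)) τ ^ s :=
  finsum_mem_eq_finite_toFinset_sum _ _

open Classical in
lemma sum_eq_sum_sum_subspaces_map {R : Type*} [AddCommMonoid R] {i : ℕ}
    (f : ThetaChar g →ₗ[ZMod 2] ThetaChar k) {S : Finset (Submodule (ZMod 2) (ThetaChar g))}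
    (hS : ∀ V ∈ S, finrank (ZMod 2) V ≤ i) (F : Submodule (ZMod 2) (ThetaChar g) → R) :
    ∑ V ∈ S, F V =
      ∑ n ∈ Finset.range (i + 1), ∑ W ∈ subspaces k n, ∑ V ∈ S with V.map f = W, F V := by
  rw [Finset.sum_sigma', ← Finset.sum_fiberwise_of_maps_to
    (g := fun V => (⟨finrank (ZMod 2) (V.map f), V.map f⟩ :
      Σ _ : ℕ, Submodule (ZMod 2) (ThetaChar k)))]
  · refine Finset.sum_congr rfl fun ⟨n, W⟩ hW =>
      Finset.sum_congr (Finset.filter_congr fun V _ => ?_) fun _ _ => rfl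
    have hn : finrank (ZMod 2) W = n := mem_subspaces.1 (Finset.mem_sigma.1 hW).2
    constructor
    · rintro ⟨⟩
      rfl
    · rintro rfl
      rw [hn]
  · intro V hV
    rw [Finset.mem_sigma, Finset.mem_range, Nat.lt_succ_iff]
    exact ⟨(Submodule.finrank_map_le f V).trans (hS V hV), mem_subspaces.2 rfl⟩

open Classical in
lemma card_subspaces_map_eq_Nsub (i : ℕ) (W₁ : Submodule (ZMod 2) (ThetaChar k))
    (W₂ : Submodule (ZMod 2) (ThetaChar l)) :
    (((subspaces (k + l) i).filter (·.map (chproj1 k l) = W₁)).filter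
        (·.map (chproj2 k l) = W₂)).card =
      Nsub (finrank (ZMod 2) W₁) (finrank (ZMod 2) W₂) i := by
  rw [← card_submodule_map_eq_Nsub (bijective_chproj1_prod_chproj2 k l), Nat.subtype_card]
  simp [mem_subspaces, and_assoc]

variable {τ₁ : Matrix (Fin k) (Fin k) ℂ} {τ₂ : Matrix (Fin l) (Fin l) ℂ}

lemma Pset_blockDiag (hτ₁ : (τ₁.map Complex.im).PosDef) (hτ₂ : (τ₂.map Complex.im).PosDef)
    (V : Submodule (ZMod 2) (ThetaChar (k + l))) :
    Pset (V : Set (ThetaChar (k + l))) (blockDiag τ₁ τ₂) =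
      Pset (V.map (chproj1 k l) : Set (ThetaChar k)) τ₁ ^
          2 ^ (finrank (ZMod 2) V - finrank (ZMod 2) (V.map (chproj1 k l))) *
        Pset (V.map (chproj2 k l) : Set (ThetaChar l)) τ₂ ^
          2 ^ (finrank (ZMod 2) V - finrank (ZMod 2) (V.map (chproj2 k l))) := by
  have h₁ := finprod_mem_comp_eq_pow (chproj1 k l) V (theta · τ₁)
  have h₂ := finprod_mem_comp_eq_pow (chproj2 k l) V (theta · τ₂)
  rw [Nat.card_zmod] at h₁ h₂
  simp only [Pset, theta_blockDiag _ hτ₁ hτ₂]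
  rw [finprod_mem_mul_distrib (Set.toFinite _), h₁, h₂]

theorem Pform_blockDiag (hτ₁ : (τ₁.map Complex.im).PosDef) (hτ₂ : (τ₂.map Complex.im).PosDef)
    (i s : ℕ) :
    Pform (k + l) i s (blockDiag τ₁ τ₂) =
      ∑ n ∈ Finset.range (i + 1), ∑ m ∈ Finset.range (i + 1),
        Nsub n m i * (Pform k n (2 ^ (i - n) * s) τ₁ * Pform l m (2 ^ (i - m) * s) τ₂) := by
  classical
  have hrank : ∀ V ∈ subspaces (k + l) i, finrank (ZMod 2) V ≤ i := fun V hV =>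
    (mem_subspaces.1 hV).le
  rw [Pform_eq_sum_subspaces, sum_eq_sum_sum_subspaces_map (chproj1 k l) hrank]
  refine Finset.sum_congr rfl fun n _ => ?_
  rw [Finset.sum_congr rfl fun W₁ _ => sum_eq_sum_sum_subspaces_map (chproj2 k l)
    (fun V hV => hrank V (Finset.mem_of_mem_filter V hV)) _, Finset.sum_comm]
  refine Finset.sum_congr rfl fun m _ => ?_
  rw [Pform_eq_sum_subspaces, Pform_eq_sum_subspaces, Finset.sum_mul_sum, Finset.mul_sum]
  refine Finset.sum_congr rfl fun W₁ hW₁ => ?_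
  rw [Finset.mul_sum]
  refine Finset.sum_congr rfl fun W₂ hW₂ => ?_
  rw [← mem_subspaces.1 hW₁, ← mem_subspaces.1 hW₂, ← card_subspaces_map_eq_Nsub, ← nsmul_eq_mul]
  refine Finset.sum_eq_card_nsmul fun V hV => ?_
  simp only [Finset.mem_filter, mem_subspaces] at hV
  obtain ⟨⟨rfl, rfl⟩, rfl⟩ := hV
  rw [Pset_blockDiag hτ₁ hτ₂, mul_pow, ← pow_mul, ← pow_mul]

theorem Gform_blockDiag (hτ₁ : (τ₁.map Complex.im).PosDef) (hτ₂ : (τ₂.map Complex.im).PosDef)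
    {i : ℕ} (hi : i ≤ 4) :
    Gform (k + l) i (blockDiag τ₁ τ₂) =
      ∑ n ∈ Finset.range (i + 1), ∑ m ∈ Finset.range (i + 1),
        Nsub n m i * (Gform k n τ₁ * Gform l m τ₂) := by
  have hexp : ∀ n ∈ Finset.range (i + 1), 2 ^ (i - n) * 2 ^ (4 - i) = 2 ^ (4 - n) := fun n hn => by
    have hni := Finset.mem_range_succ_iff.1 hn
    rw [← pow_add]
    congr 1
    omega
  rw [Gform, Pform_blockDiag hτ₁ hτ₂]
  refine Finset.sum_congr rfl fun n hn => Finset.sum_congr rfl fun m hm => ?_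
  rw [hexp n hn, hexp m hm, Gform, Gform]

end BlockDiagonal

theorem Xi2_factorization (τ₁ τ₂ : Matrix (Fin 1) (Fin 1) ℂ)
    (hτ₁ : IsSiegel τ₁) (hτ₂ : IsSiegel τ₂) :
    Xi2 (blockDiag τ₁ τ₂) = Xi1 τ₁ * Xi1 τ₂ := by
  have hG {i : ℕ} (hi : i ≤ 4) := Gform_blockDiag hτ₁.2 hτ₂.2 hi
  have hvanish (τ : Matrix (Fin 1) (Fin 1) ℂ) : Gform 1 2 τ = 0 :=
    Pform_eq_zero_of_lt one_lt_two (by norm_num) τ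
  have hG₀ : Gform 2 0 (blockDiag τ₁ τ₂) = Gform 1 0 τ₁ * Gform 1 0 τ₂ := by
    simpa [Nsub_add 0 0] using hG (Nat.zero_le 4)
  have hG₁ : Gform 2 1 (blockDiag τ₁ τ₂) = Gform 1 0 τ₁ * Gform 1 1 τ₂ +
      Gform 1 1 τ₁ * Gform 1 0 τ₂ + Gform 1 1 τ₁ * Gform 1 1 τ₂ := by
    simpa [Finset.sum_range_succ, Nsub_eq_zero_of_lt, Nsub_add 0 1, Nsub_add 1 0, Nsub_self,
      add_assoc] using hG (i := 1) (by norm_num)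
  have hG₂ : Gform 2 2 (blockDiag τ₁ τ₂) = Gform 1 1 τ₁ * Gform 1 1 τ₂ := by
    simpa [Finset.sum_range_succ, hvanish, Nsub_eq_zero_of_lt, Nsub_add 1 1] using
      hG (i := 2) (by norm_num)
  rw [Xi2, Xi1, Xi1, hG₀, hG₁, hG₂]
  ring
end
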